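/- For any α ∈ (0,∞] with α ≠ 1, there is no joining between the systems (X, μ, T) and (X, αμ, T), where T is the infinite Chacon transformation and μ is Lebesgue measure on X = ℝ₊. -/

import Mathlib

open MeasureTheory Set
open scoped ENNReal NNReal Classical

noncomputable section

/-- Heights of the towers of the infinite Chacon transformation
(tower `0` is `[0,1)` with a single level, so `chaconH 1 = 8`). -/
def chaconH : ℕ → ℕ
  | 0 => 1
  | n + 1 => 2 * (3 * chaconH n + 1)

/-- Left endpoint of level `k` of tower `n`.  At step `n+1`, tower `n` (which fills
`[0, hₙ·3⁻ⁿ)`) is cut into three subcolumns of equal width; one spacer is added above the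
middle subcolumn and `3hₙ+1` spacers above the third one, the spacers being taken
successively as the leftmost intervals of length `3⁻⁽ⁿ⁺¹⁾` in the unused part of `ℝ₊`;
then the three subcolumns are stacked left under right. -/
def chaconL : ℕ → ℕ → ℝ
  | 0, _ => 0
  | n + 1, k =>
      if k < chaconH n then chaconL n k
      else if k < 2 * chaconH n then chaconL n (k - chaconH n) + (3 : ℝ)⁻¹ ^ (n + 1)
      else if k = 2 * chaconH n then (chaconH n : ℝ) * (3 : ℝ)⁻¹ ^ n
      else if k ≤ 3 * chaconH n then
        chaconL n (k - 2 * chaconH n - 1) + 2 * (3 : ℝ)⁻¹ ^ (n + 1)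
      else (chaconH n : ℝ) * (3 : ℝ)⁻¹ ^ n
        + ((k : ℝ) - 3 * (chaconH n : ℝ)) * (3 : ℝ)⁻¹ ^ (n + 1)

/-- Level `k` of tower `n`: an interval of length `3⁻ⁿ`, closed to the left and open to
the right. -/
def chaconLevel (n k : ℕ) : Set ℝ := Ico (chaconL n k) (chaconL n k + (3 : ℝ)⁻¹ ^ n)

/-- The Chacon transformation on `ℝ`: each point of a non-top level of some tower is sent
to the point directly above it (the value does not depend on the choice of the tower). -/
def chaconT0 (x : ℝ) : ℝ :=
  if h : ∃ p : ℕ × ℕ, p.2 + 1 < chaconH p.1 ∧ x ∈ chaconLevel p.1 p.2 then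
    x - chaconL h.choose.1 h.choose.2 + chaconL h.choose.1 (h.choose.2 + 1)
  else x

/-- The inverse of the Chacon transformation on `ℝ`. -/
def chaconT0inv (x : ℝ) : ℝ :=
  if h : ∃ p : ℕ × ℕ, p.2 + 1 < chaconH p.1 ∧ x ∈ chaconLevel p.1 (p.2 + 1) then
    x - chaconL h.choose.1 (h.choose.2 + 1) + chaconL h.choose.1 h.choose.2
  else x

/-- The space `X = ℝ₊`. -/
abbrev ChaconX : Type := ↥(Set.Ici (0 : ℝ))

/-- The infinite Chacon transformation `T` on `X = ℝ₊`. -/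
def chaconT (x : ChaconX) : ChaconX :=
  ⟨max 0 (chaconT0 (x : ℝ)), Set.mem_Ici.mpr (le_max_left 0 _)⟩

/-- The inverse `T⁻¹` of the Chacon transformation on `X = ℝ₊`. -/
def chaconTinv (x : ChaconX) : ChaconX :=
  ⟨max 0 (chaconT0inv (x : ℝ)), Set.mem_Ici.mpr (le_max_left 0 _)⟩

/-- Integer powers `T^j` of the Chacon transformation. -/
def chaconTZ (j : ℤ) : ChaconX → ChaconX :=
  if 0 ≤ j then chaconT^[j.toNat] else chaconTinv^[(-j).toNat]

/-- Lebesgue measure `μ` on `X = ℝ₊`. -/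
def chaconMu : Measure ChaconX := volume.comap Subtype.val

/-- `C n`: the bottom half of tower `n` (its lowest `hₙ/2` levels), as a subset of `X`. -/
def chaconC (n : ℕ) : Set ChaconX :=
  {x | ∃ k, k < chaconH n / 2 ∧ (x : ℝ) ∈ chaconLevel n k}

/-- `tₙ x ∈ {1,2,3}`: the subcolumn of tower `n` containing `x`
(junk value `0` if `x` is not in tower `n`). -/
def chaconTn (n : ℕ) (x : ChaconX) : ℕ :=
  if h : ∃ k, k < chaconH n ∧ (x : ℝ) ∈ chaconLevel n k then
    1 + (⌊((x : ℝ) - chaconL n h.choose) * (3 : ℝ) ^ (n + 1)⌋).toNat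
  else 0

/-- The Cartesian power `T^{×ι}` of the Chacon transformation, acting coordinatewise. -/
def chaconTd (ι : Type) (x : ι → ChaconX) : ι → ChaconX := fun i => chaconT (x i)

/-- Integer powers `(T^{×ι})^j`, acting coordinatewise. -/
def chaconTdZ (ι : Type) (j : ℤ) (x : ι → ChaconX) : ι → ChaconX := fun i => chaconTZ j (x i)

/-- `Cₙ^ι ⊆ X^ι`. -/
def chaconCd (ι : Type) (n : ℕ) : Set (ι → ChaconX) := {x | ∀ i, x i ∈ chaconC n}

/-- An `n`-box: a Cartesian product of levels of `C n`. -/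
def IsNBox (ι : Type) (n : ℕ) (B : Set (ι → ChaconX)) : Prop :=
  ∃ k : ι → ℕ, (∀ i, k i < chaconH n / 2) ∧
    B = {x : ι → ChaconX | ∀ i, ((x i : ℝ)) ∈ chaconLevel n (k i)}

/-- An `n`-diagonal: a maximal finite family of `n`-boxes `B, T^{×d}B, …, (T^{×d})^ℓ B`,
regarded as the union of its boxes. -/
def IsNDiagonal (ι : Type) (n : ℕ) (D : Set (ι → ChaconX)) : Prop :=
  ∃ (B : Set (ι → ChaconX)) (ℓ : ℕ),
    (∀ j : ℕ, j ≤ ℓ → IsNBox ι n (chaconTdZ ι (j : ℤ) '' B)) ∧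
    ¬ chaconTdZ ι (-1) '' B ⊆ chaconCd ι n ∧
    ¬ chaconTdZ ι ((ℓ : ℤ) + 1) '' B ⊆ chaconCd ι n ∧
    D = ⋃ j ∈ Finset.range (ℓ + 1), chaconTdZ ι (j : ℤ) '' B

/-- A measure is boundedly finite if bounded (measurable) sets have finite measure. -/
def BoundedlyFinite {α : Type*} [MeasurableSpace α] [PseudoMetricSpace α]
    (σ : Measure α) : Prop :=
  ∀ A : Set α, MeasurableSet A → Bornology.IsBounded A → σ A < ⊤

/-- Diagonal measures on `X^ι`: boundedly finite, `T^{×ι}`-invariant measures which are,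
for every large enough `n`, concentrated on a single `n`-diagonal inside `Cₙ^ι`. -/
def IsDiagonalMeasure (ι : Type) [Fintype ι] (σ : Measure (ι → ChaconX)) : Prop :=
  BoundedlyFinite σ ∧ σ.map (chaconTd ι) = σ ∧
    ∃ n₀ : ℕ, 1 ≤ n₀ ∧ ∀ n, n₀ ≤ n →
      ∃ D : Set (ι → ChaconX), IsNDiagonal ι n D ∧ σ (chaconCd ι n \ D) = 0

/-- A wandering set for the `ℤ`-action `Uz`. -/
def ZWandering {α : Type*} (Uz : ℤ → α → α) (W : Set α) : Prop :=
  ∀ j k : ℤ, j ≠ k → Disjoint (Uz j '' W) (Uz k '' W)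

/-- Conservativity: every measurable wandering set is null. -/
def ZConservative {α : Type*} [MeasurableSpace α] (σ : Measure α) (Uz : ℤ → α → α) : Prop :=
  ∀ W : Set α, MeasurableSet W → ZWandering Uz W → σ W = 0

/-- Total dissipativity: mod `σ`, the space is the disjoint union of the iterates of a
wandering set. -/
def ZTotallyDissipative {α : Type*} [MeasurableSpace α] (σ : Measure α)
    (Uz : ℤ → α → α) : Prop :=
  ∃ W : Set α, MeasurableSet W ∧ ZWandering Uz W ∧ σ ((⋃ j : ℤ, Uz j '' W)ᶜ) = 0

/-- Ergodicity of a (not necessarily finite) invariant measure: every invariant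
measurable set is null or conull. -/
def MeasErgodic {α : Type*} [MeasurableSpace α] (σ : Measure α) (U : α → α) : Prop :=
  ∀ A : Set α, MeasurableSet A → U ⁻¹' A = A → σ A = 0 ∨ σ Aᶜ = 0

/-- `Icc a b` is an `n`-crossing for `x`: a maximal finite set of consecutive integers `j`
with `(T^{×ι})^j x ∈ Cₙ^ι`. -/
def IsCrossing (ι : Type) (n : ℕ) (x : ι → ChaconX) (a b : ℤ) : Prop :=
  a ≤ b ∧ (∀ j : ℤ, a ≤ j → j ≤ b → chaconTdZ ι j x ∈ chaconCd ι n) ∧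
    chaconTdZ ι (a - 1) x ∉ chaconCd ι n ∧ chaconTdZ ι (b + 1) x ∉ chaconCd ι n

/-- `n(x)`: the smallest `n ≥ 1` with `x ∈ Cₙ^ι`. -/
def chaconNOf (ι : Type) (x : ι → ChaconX) : ℕ :=
  if h : ∃ n : ℕ, 1 ≤ n ∧ x ∈ chaconCd ι n then Nat.find h else 0

/-- `B(τ)`: the points of `B` whose coordinate `i` lies in subcolumn `τ i` of tower `n`. -/
def chaconBoxTau (ι : Type) (n : ℕ) (B : Set (ι → ChaconX)) (τ : ι → ℕ) :
    Set (ι → ChaconX) :=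
  {x ∈ B | ∀ i, chaconTn n (x i) = τ i}

/-- The transition from the `n`-diagonal `D` to the `(n+1)`-diagonal `D'` is the central
one, i.e. `D' = D(1,…,1)`. -/
def CentralTransition (ι : Type) (n : ℕ) (D D' : Set (ι → ChaconX)) : Prop :=
  ∀ B : Set (ι → ChaconX), IsNBox ι n B → B ⊆ D →
    chaconBoxTau ι n B (fun _ => 1) ⊆ D'

/-- The `n`-diagonal containing a given set (junk value `∅` if there is none). -/
def diagOfBox (ι : Type) (n : ℕ) (B : Set (ι → ChaconX)) : Set (ι → ChaconX) :=
  if h : ∃ D, IsNDiagonal ι n D ∧ B ⊆ D then h.choose else ∅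

/-- `D(τ)`: the `(n+1)`-diagonal containing `B(τ)` for an `n`-box `B ⊆ D`. -/
def diagTau (ι : Type) (n : ℕ) (D : Set (ι → ChaconX)) (τ : ι → ℕ) : Set (ι → ChaconX) :=
  if h : ∃ B, IsNBox ι n B ∧ B ⊆ D then diagOfBox ι (n + 1) (chaconBoxTau ι n h.choose τ)
  else ∅

/-- A consistent family of diagonals `(Dₙ)_{n ≥ n₀}`. -/
def IsConsistentFamily (ι : Type) (n₀ : ℕ) (D : ℕ → Set (ι → ChaconX)) : Prop :=
  (∀ n, n₀ ≤ n → IsNDiagonal ι n (D n)) ∧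
    (chaconCd ι (n₀ - 1) ∩ ⋂ n, ⋂ (_ : n₀ ≤ n), D n).Nonempty ∧
    ∀ n, n₀ ≤ n → D (n + 1) ∩ chaconCd ι n ⊆ D n

/-- `x` is seen by the family of diagonals `(Dₙ)_{n ≥ n₀}`. -/
def SeenByFam (ι : Type) (n₀ : ℕ) (D : ℕ → Set (ι → ChaconX)) (x : ι → ChaconX) : Prop :=
  ∀ n, n₀ ≤ n → x ∉ chaconCd ι n ∨ x ∈ D n

/-- Graph joinings arising from powers of `T`:
`σ(A₁ × ⋯ × A_d) = α μ(T^{-k₁}A₁ ∩ ⋯ ∩ T^{-k_d}A_d)` for some `0 < α < ∞`. -/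
def IsGraphJoining (ι : Type) [Fintype ι] (σ : Measure (ι → ChaconX)) : Prop :=
  ∃ (α : ℝ≥0∞) (k : ι → ℤ), 0 < α ∧ α ≠ ⊤ ∧
    ∀ A : ι → Set ChaconX, (∀ i, MeasurableSet (A i)) →
      σ (Set.univ.pi A) = α * chaconMu (⋂ i, chaconTZ (k i) ⁻¹' A i)

/-- Ergodic components of `σ`: the nonzero boundedly finite `T^{×ι}`-invariant ergodic
measures, absolutely continuous with respect to `σ`, which appear in its ergodic
decomposition. -/
def IsErgodicComponent (ι : Type) [Fintype ι] (σ ρ : Measure (ι → ChaconX)) : Prop :=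
  ρ ≠ 0 ∧ BoundedlyFinite ρ ∧ ρ.map (chaconTd ι) = ρ ∧ MeasErgodic ρ (chaconTd ι) ∧ ρ ≪ σ

end

theorem garsia_pos {Z : Type*} [MeasurableSpace Z] {m : Measure Z} {U : Z → Z}
    (hU : MeasurePreserving U m m) (h : Z → ℝ) (hm : Measurable h) (hi : Integrable h m)
    (hneg : ∫ z, h z ∂m < 0) :
    m {z | ∀ k, birkhoffSum U h k z ≤ 0} ≠ 0 := by
  let M : ℕ → Z → ℝ := fun N => Nat.rec (fun _ => 0) (fun _ r z => max 0 (h z + r (U z))) N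
  have M0 : M 0 = fun _ => 0 := rfl
  have MS : ∀ N z, M (N + 1) z = max 0 (h z + M N (U z)) := fun N z => rfl
  have Mmeas : ∀ N, Measurable (M N) := by
    intro N
    induction N with
    | zero => rw [M0]; exact measurable_const
    | succ N ih =>
      have : M (N + 1) = fun z => max 0 (h z + M N (U z)) := rfl
      rw [this]
      exact measurable_const.max (hm.add (ih.comp hU.measurable))
  have Mint : ∀ N, Integrable (M N) m := by
    intro N
    induction N with
    | zero => rw [M0]; exact integrable_zero _ _ _
    | succ N ih =>
      have : M (N + 1) = fun z => max 0 (h z + M N (U z)) := rfl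
      rw [this]
      exact (integrable_zero _ _ _).sup (hi.add (hU.integrable_comp_of_integrable ih))
  have Mnn : ∀ N z, 0 ≤ M N z := by
    intro N z
    cases N with
    | zero => rw [M0]
    | succ N => rw [MS]; exact le_max_left _ _
  have Mmono1 : ∀ N z, M N z ≤ M (N + 1) z := by
    intro N
    induction N with
    | zero => intro z; rw [M0]; exact Mnn 1 z
    | succ N ih =>
      intro z
      rw [MS, MS (N + 1)]
      exact max_le_max le_rfl (by linarith [ih (U z)])
  have Bir : ∀ k z, birkhoffSum U h k z ≤ M k z := by
    intro k
    induction k with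
    | zero => intro z; simp [M0]
    | succ k ih =>
      intro z
      rw [birkhoffSum_succ', MS]
      exact le_max_of_le_right (by linarith [ih (U z)])
  let P : ℕ → Set Z := fun N => {z | 0 < M (N + 1) z}
  have Pmeas : ∀ N, MeasurableSet (P N) := fun N => measurableSet_lt measurable_const (Mmeas (N + 1))
  have Pmono : Monotone P := by
    apply monotone_nat_of_le_succ
    intro N z hz
    exact lt_of_lt_of_le hz (Mmono1 (N + 1) z)
  have key : ∀ N, 0 ≤ ∫ z in P N, h z ∂m := by
    intro N
    have hcomp : Integrable (fun z => M (N + 1) (U z)) m :=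
      hU.integrable_comp_of_integrable (Mint (N + 1))
    have h1 : ∫ z in P N, (M (N + 1) z - M (N + 1) (U z)) ∂m ≤ ∫ z in P N, h z ∂m := by
      apply setIntegral_mono_on ((Mint (N + 1)).sub hcomp).integrableOn hi.integrableOn (Pmeas N)
      intro z hz
      have hz' : 0 < M (N + 1) z := hz
      have h2 := MS N z
      have h3 := Mmono1 N (U z)
      show M (N + 1) z - M (N + 1) (U z) ≤ h z
      rcases max_choice 0 (h z + M N (U z)) with h4 | h4 <;> rw [h4] at h2 <;> linarith
    rw [integral_sub (Mint (N + 1)).integrableOn hcomp.integrableOn] at h1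
    have h5 : ∫ z in P N, M (N + 1) z ∂m = ∫ z, M (N + 1) z ∂m := by
      apply setIntegral_eq_integral_of_forall_compl_eq_zero
      intro z hz
      have : ¬ 0 < M (N + 1) z := hz
      linarith [Mnn (N + 1) z]
    have h6 : ∫ z in P N, M (N + 1) (U z) ∂m ≤ ∫ z, M (N + 1) (U z) ∂m :=
      setIntegral_le_integral hcomp (Filter.Eventually.of_forall fun z => Mnn (N + 1) (U z))
    have h7 : ∫ z, M (N + 1) (U z) ∂m = ∫ z, M (N + 1) z ∂m := by
      have := integral_map (μ := m) hU.measurable.aemeasurable (f := M (N + 1))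
        (Mmeas (N + 1)).aestronglyMeasurable
      rw [hU.map_eq] at this
      exact this.symm
    linarith
  intro h0
  have hlim := tendsto_setIntegral_of_monotone (μ := m) (f := h) Pmeas Pmono hi.integrableOn
  have huniv : ∫ z in ⋃ N, P N, h z ∂m = ∫ z, h z ∂m := by
    rw [← setIntegral_univ (μ := m)]
    apply setIntegral_congr_set
    rw [ae_eq_univ]
    refine measure_mono_null ?_ h0
    intro z hz k
    simp only [mem_compl_iff, mem_iUnion, not_exists] at hz
    have : ¬ 0 < M (k + 1) z := hz k
    linarith [Bir k z, Mmono1 k z]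
  rw [huniv] at hlim
  have := ge_of_tendsto' hlim key
  linarith

theorem garsia_sets {Z : Type*} [MeasurableSpace Z] {m : Measure Z} [SigmaFinite m] {U : Z → Z}
    (hU : MeasurePreserving U m m) (F G : Set Z) (hF : MeasurableSet F) (hG : MeasurableSet G)
    (hFt : m F ≠ ⊤) (hF0 : m F ≠ 0) (hFG : m F < m G) :
    ∃ c : ℝ, 1 < c ∧ m {z | ∀ k, c * birkhoffSum U (F.indicator fun _ => (1 : ℝ)) k z ≤
      birkhoffSum U (G.indicator fun _ => (1 : ℝ)) k z} ≠ 0 := by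
  obtain ⟨G', hG', hsub, hlt, htop⟩ := Measure.exists_subset_measure_lt_top hG hFG
  have hlt' : m.real F < m.real G' := (ENNReal.toReal_lt_toReal hFt htop.ne).2 hlt
  have hFpos : 0 < m.real F := ENNReal.toReal_pos hF0 hFt
  obtain ⟨c, hc1, hc2⟩ := exists_between ((one_lt_div hFpos).2 hlt')
  refine ⟨c, hc1, ?_⟩
  have iF : Integrable (F.indicator fun _ => (1 : ℝ)) m :=
    (integrable_indicator_iff hF).2 (integrableOn_const hFt)
  have iG : Integrable (G'.indicator fun _ => (1 : ℝ)) m :=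
    (integrable_indicator_iff hG').2 (integrableOn_const htop.ne)
  have := garsia_pos hU (fun z => c * F.indicator (fun _ => (1 : ℝ)) z - G'.indicator (fun _ => 1) z)
    (by
      refine Measurable.sub (measurable_const.mul ?_) ?_
      · exact measurable_const.indicator hF
      · exact measurable_const.indicator hG') ((iF.const_mul c).sub iG)
    (by
      rw [integral_sub (iF.const_mul c) iG, integral_const_mul, integral_indicator hF,
        integral_indicator hG']
      simp only [integral_const, smul_eq_mul, mul_one, measureReal_restrict_apply_univ]
      rw [lt_div_iff₀ hFpos] at hc2
      linarith)
  intro h0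
  apply this
  refine measure_mono_null ?_ h0
  intro z hz k
  have h1 := hz k
  have h2 : birkhoffSum U (G'.indicator fun _ => (1 : ℝ)) k z ≤
      birkhoffSum U (G.indicator fun _ => (1 : ℝ)) k z := by
    unfold birkhoffSum
    exact Finset.sum_le_sum fun i _ => indicator_le_indicator_of_subset hsub (fun _ => zero_le_one) _
  simp only [birkhoffSum, Finset.sum_sub_distrib, ← Finset.mul_sum] at h1 h2 ⊢
  linarith

/-- Integer index of level `k` of tower `n`: the level is `[I, I+1) / 3^n`. -/
def chI : ℕ → ℕ → ℕ
  | 0, _ => 0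
  | n + 1, k =>
      if k < chaconH n then 3 * chI n k
      else if k < 2 * chaconH n then 3 * chI n (k - chaconH n) + 1
      else if k = 2 * chaconH n then 3 * chaconH n
      else if k ≤ 3 * chaconH n then 3 * chI n (k - 2 * chaconH n - 1) + 2
      else k

theorem chH_succ (n : ℕ) : chaconH (n + 1) = 2 * (3 * chaconH n + 1) := rfl

theorem chH_ge (n : ℕ) : 6 ^ n ≤ chaconH n := by
  induction n with
  | zero => simp [chaconH]
  | succ n ih => rw [chH_succ, pow_succ]; omega

theorem chH_ge3 (n : ℕ) : 3 ^ n ≤ chaconH n :=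
  (Nat.pow_le_pow_left (by norm_num) n).trans (chH_ge n)

theorem chH_pos (n : ℕ) : 0 < chaconH n := lt_of_lt_of_le (by positivity) (chH_ge n)

theorem chH_mono : Monotone chaconH := by
  apply monotone_nat_of_le_succ
  intro n
  rw [chH_succ]; omega

theorem chI1 {n k : ℕ} (h : k < chaconH n) : chI (n + 1) k = 3 * chI n k := by
  simp [chI, h]

theorem chI2 {n k : ℕ} (h : k < chaconH n) : chI (n + 1) (k + chaconH n) = 3 * chI n k + 1 := by
  have h1 : ¬ k + chaconH n < chaconH n := by omega
  have h2 : k + chaconH n < 2 * chaconH n := by omega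
  simp only [chI, h1, h2, if_true, if_false, Nat.add_sub_cancel]

theorem chI_mid (n : ℕ) : chI (n + 1) (2 * chaconH n) = 3 * chaconH n := by
  have := chH_pos n
  have h1 : ¬ 2 * chaconH n < chaconH n := by omega
  simp only [chI, h1, lt_irrefl, if_true, if_false]

theorem chI3 {n k : ℕ} (h : k < chaconH n) :
    chI (n + 1) (k + (2 * chaconH n + 1)) = 3 * chI n k + 2 := by
  have h1 : ¬ k + (2 * chaconH n + 1) < chaconH n := by omega
  have h2 : ¬ k + (2 * chaconH n + 1) < 2 * chaconH n := by omega
  have h3 : ¬ k + (2 * chaconH n + 1) = 2 * chaconH n := by omega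
  have h4 : k + (2 * chaconH n + 1) ≤ 3 * chaconH n := by omega
  have h5 : k + (2 * chaconH n + 1) - 2 * chaconH n - 1 = k := by omega
  simp only [chI, h1, h2, h3, h4, h5, if_true, if_false]

theorem chI4 {n k : ℕ} (h : 3 * chaconH n < k) : chI (n + 1) k = k := by
  have h1 : ¬ k < chaconH n := by omega
  have h2 : ¬ k < 2 * chaconH n := by omega
  have h3 : ¬ k = 2 * chaconH n := by omega
  have h4 : ¬ k ≤ 3 * chaconH n := by omega
  simp only [chI, h1, h2, h3, h4, if_false]

/-- Position of a level of tower `n+1` relative to tower `n`. -/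
theorem ch_cases (n k : ℕ) :
    (∃ a, a < chaconH n ∧ k = a ∧ chI (n + 1) k = 3 * chI n a) ∨
    (∃ a, a < chaconH n ∧ k = a + chaconH n ∧ chI (n + 1) k = 3 * chI n a + 1) ∨
    (∃ a, a < chaconH n ∧ k = a + (2 * chaconH n + 1) ∧ chI (n + 1) k = 3 * chI n a + 2) ∨
    (k = 2 * chaconH n ∧ chI (n + 1) k = 3 * chaconH n) ∨
    (3 * chaconH n < k ∧ chI (n + 1) k = k) := by
  by_cases h1 : k < chaconH n
  · exact Or.inl ⟨k, h1, rfl, chI1 h1⟩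
  by_cases h2 : k < 2 * chaconH n
  · refine Or.inr (Or.inl ⟨k - chaconH n, by omega, by omega, ?_⟩)
    have := chI2 (n := n) (k := k - chaconH n) (by omega)
    rwa [Nat.sub_add_cancel (by omega)] at this
  by_cases h3 : k = 2 * chaconH n
  · exact Or.inr (Or.inr (Or.inr (Or.inl ⟨h3, by rw [h3]; exact chI_mid n⟩)))
  by_cases h4 : k ≤ 3 * chaconH n
  · refine Or.inr (Or.inr (Or.inl ⟨k - (2 * chaconH n + 1), by omega, by omega, ?_⟩))
    have := chI3 (n := n) (k := k - (2 * chaconH n + 1)) (by omega)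
    rwa [Nat.sub_add_cancel (by omega)] at this
  · exact Or.inr (Or.inr (Or.inr (Or.inr ⟨by omega, chI4 (by omega)⟩)))

theorem chI_lt {n k : ℕ} (h : k < chaconH n) : chI n k < chaconH n := by
  induction n generalizing k with
  | zero => simp [chI, chaconH]
  | succ n ih =>
    rw [chH_succ] at h ⊢
    rcases ch_cases n k with ⟨a, ha, _, hI⟩ | ⟨a, ha, _, hI⟩ | ⟨a, ha, _, hI⟩ | ⟨_, hI⟩ | ⟨_, hI⟩
    · have := ih ha; omega
    · have := ih ha; omega
    · have := ih ha; omega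
    · omega
    · omega

theorem chI_inj {n k l : ℕ} (hk : k < chaconH n) (hl : l < chaconH n) (h : chI n k = chI n l) :
    k = l := by
  induction n generalizing k l with
  | zero => simp [chaconH] at hk hl; omega
  | succ n ih =>
    rcases ch_cases n k with ⟨a, ha, hk, hI⟩ | ⟨a, ha, hk, hI⟩ | ⟨a, ha, hk, hI⟩ | ⟨hk, hI⟩ | ⟨hk, hI⟩ <;>
    rcases ch_cases n l with ⟨b, hb, hl, hJ⟩ | ⟨b, hb, hl, hJ⟩ | ⟨b, hb, hl, hJ⟩ | ⟨hl, hJ⟩ | ⟨hl, hJ⟩ <;>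
    first
      | (have := ih ha hb (by omega); omega)
      | (have := chI_lt ha; have := chI_lt hb; omega)
      | (have := chI_lt ha; omega)
      | (have := chI_lt hb; omega)
      | omega

theorem chI_surj {n v : ℕ} (hv : v < chaconH n) : ∃ k, k < chaconH n ∧ chI n k = v := by
  induction n generalizing v with
  | zero => exact ⟨0, by simp [chaconH], by simp [chaconH] at hv; simp [chI, hv]⟩
  | succ n ih =>
    rw [chH_succ] at hv ⊢
    by_cases h1 : v < 3 * chaconH n
    · obtain ⟨a, ha, hI⟩ := ih (v := v / 3) (by omega)
      have : v % 3 = 0 ∨ v % 3 = 1 ∨ v % 3 = 2 := by omega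
      rcases this with h | h | h
      · exact ⟨a, by omega, by rw [chI1 ha]; omega⟩
      · exact ⟨a + chaconH n, by omega, by rw [chI2 ha]; omega⟩
      · exact ⟨a + (2 * chaconH n + 1), by omega, by rw [chI3 ha]; omega⟩
    by_cases h2 : v = 3 * chaconH n
    · exact ⟨2 * chaconH n, by omega, by rw [chI_mid]; omega⟩
    · exact ⟨v, by omega, chI4 (by omega)⟩

theorem chL_eq (n k : ℕ) : chaconL n k = (chI n k : ℝ) * (3 : ℝ)⁻¹ ^ n := by
  induction n generalizing k with
  | zero => simp [chaconL, chI]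
  | succ n ih =>
    unfold chaconL chI
    split_ifs
    · rw [ih, pow_succ]; push_cast; ring
    · rw [ih, pow_succ]; push_cast; ring
    · rw [pow_succ]; push_cast; ring
    · rw [ih, pow_succ]; push_cast; ring
    · rw [pow_succ]; push_cast; ring

/-- Index of the triadic interval of rank `n` containing `x`. -/
noncomputable def chF (n : ℕ) (x : ℝ) : ℕ := ⌊x * 3 ^ n⌋₊

theorem mem_level {n k : ℕ} {x : ℝ} : x ∈ chaconLevel n k ↔ 0 ≤ x ∧ chF n x = chI n k := by
  have h3 : (0 : ℝ) < 3 ^ n := by positivity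
  have key : x ∈ chaconLevel n k ↔ (chI n k : ℝ) ≤ x * 3 ^ n ∧ x * 3 ^ n < chI n k + 1 := by
    unfold chaconLevel
    rw [mem_Ico, chL_eq, inv_pow, ← add_one_mul, ← div_eq_mul_inv, ← div_eq_mul_inv,
      div_le_iff₀ h3, lt_div_iff₀ h3]
  rw [key]
  constructor
  · intro h
    have h0 : 0 ≤ x * 3 ^ n := le_trans (Nat.cast_nonneg _) h.1
    exact ⟨nonneg_of_mul_nonneg_left h0 h3, (Nat.floor_eq_iff h0).2 h⟩
  · intro h
    exact (Nat.floor_eq_iff (mul_nonneg h.1 h3.le)).1 h.2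

theorem chF_succ (n : ℕ) (x : ℝ) : chF (n + 1) x / 3 = chF n x := by
  unfold chF
  rw [← Nat.floor_div_natCast]
  congr 1
  rw [pow_succ]; push_cast; ring

theorem chF_lt_one {n : ℕ} {x : ℝ} (hx : 0 ≤ x) : x < 1 ↔ chF n x < 3 ^ n := by
  have h3 : (0 : ℝ) < 3 ^ n := by positivity
  unfold chF
  rw [Nat.floor_lt (by positivity)]
  push_cast
  constructor
  · intro h; nlinarith
  · intro h; by_contra h'; push Not at h'; nlinarith

theorem level_split {n k : ℕ} {x : ℝ} (hk : k < chaconH n) (hx : x ∈ chaconLevel n k) :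
    x ∈ chaconLevel (n + 1) k ∨ x ∈ chaconLevel (n + 1) (k + chaconH n) ∨
      x ∈ chaconLevel (n + 1) (k + (2 * chaconH n + 1)) := by
  rw [mem_level] at hx
  simp only [mem_level, chI1 hk, chI2 hk, chI3 hk, hx.1, true_and]
  have := chF_succ n x
  omega

/-- Displacement from level `k` to level `k+1` of tower `n`. -/
noncomputable def chDisp (n k : ℕ) : ℝ := chaconL n (k + 1) - chaconL n k

theorem lift_one {n k : ℕ} {x : ℝ} (hk : k + 1 < chaconH n) (hx : x ∈ chaconLevel n k) :
    ∃ k', k' + 1 < chaconH (n + 1) ∧ x ∈ chaconLevel (n + 1) k' ∧ chDisp (n + 1) k' = chDisp n k := by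
  have hk0 : k < chaconH n := by omega
  rcases level_split hk0 hx with h | h | h
  · refine ⟨k, by rw [chH_succ]; omega, h, ?_⟩
    simp only [chDisp, chL_eq, chI1 hk0, chI1 hk, pow_succ]
    push_cast; ring
  · refine ⟨_, by rw [chH_succ]; omega, h, ?_⟩
    simp only [chDisp, chL_eq]
    rw [show k + chaconH n + 1 = k + 1 + chaconH n by ring, chI2 hk0, chI2 hk, pow_succ]
    push_cast; ring
  · refine ⟨_, by rw [chH_succ]; omega, h, ?_⟩
    simp only [chDisp, chL_eq]
    rw [show k + (2 * chaconH n + 1) + 1 = k + 1 + (2 * chaconH n + 1) by ring, chI3 hk0, chI3 hk,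
      pow_succ]
    push_cast; ring

theorem lift_many {n k : ℕ} {x : ℝ} (hk : k + 1 < chaconH n) (hx : x ∈ chaconLevel n k) (N : ℕ)
    (hN : n ≤ N) :
    ∃ k', k' + 1 < chaconH N ∧ x ∈ chaconLevel N k' ∧ chDisp N k' = chDisp n k := by
  induction N, hN using Nat.le_induction with
  | base => exact ⟨k, hk, hx, rfl⟩
  | succ N _ ih =>
    obtain ⟨a, ha, hxa, hd⟩ := ih
    obtain ⟨b, hb, hxb, hd'⟩ := lift_one ha hxa
    exact ⟨b, hb, hxb, hd'.trans hd⟩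

theorem level_unique {n k l : ℕ} {x : ℝ} (hk : k < chaconH n) (hl : l < chaconH n)
    (hx : x ∈ chaconLevel n k) (hx' : x ∈ chaconLevel n l) : k = l := by
  rw [mem_level] at hx hx'
  exact chI_inj hk hl (hx.2.symm.trans hx'.2)

theorem T0_eq {n k : ℕ} {x : ℝ} (hk : k + 1 < chaconH n) (hx : x ∈ chaconLevel n k) :
    chaconT0 x = x + chDisp n k := by
  have h : ∃ p : ℕ × ℕ, p.2 + 1 < chaconH p.1 ∧ x ∈ chaconLevel p.1 p.2 := ⟨(n, k), hk, hx⟩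
  have hs := h.choose_spec
  have e : chaconT0 x = x + chDisp h.choose.1 h.choose.2 := by
    unfold chaconT0 chDisp
    rw [dif_pos h]; ring
  rw [e]
  generalize h.choose = p at hs
  obtain ⟨a, ha, hxa, hda⟩ := lift_many hk hx (max n p.1) (le_max_left _ _)
  obtain ⟨b, hb, hxb, hdb⟩ := lift_many hs.1 hs.2 (max n p.1) (le_max_right _ _)
  have : a = b := level_unique (by omega) (by omega) hxa hxb
  subst this
  rw [← hda, ← hdb]

theorem T0_mem {n k : ℕ} {x : ℝ} (hk : k + 1 < chaconH n) (hx : x ∈ chaconLevel n k) :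
    chaconT0 x ∈ chaconLevel n (k + 1) := by
  rw [T0_eq hk hx]
  unfold chaconLevel chDisp at *
  rw [mem_Ico] at *
  constructor <;> linarith [hx.1, hx.2]

theorem T_val {n k : ℕ} {x : ChaconX} (hk : k + 1 < chaconH n) (hx : (x : ℝ) ∈ chaconLevel n k) :
    (chaconT x : ℝ) = chaconT0 x := by
  show max 0 (chaconT0 x) = chaconT0 x
  exact max_eq_right (mem_level.1 (T0_mem hk hx)).1

theorem T_iter {n k : ℕ} {x : ChaconX} (hx : (x : ℝ) ∈ chaconLevel n k) (j : ℕ)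
    (hk : k + j < chaconH n) : ((chaconT^[j] x : ChaconX) : ℝ) ∈ chaconLevel n (k + j) := by
  induction j with
  | zero => simpa using hx
  | succ j ih =>
    have h1 := ih (by omega)
    rw [Function.iterate_succ_apply', T_val (by omega) h1]
    exact T0_mem (by omega) h1

theorem exists_tower (x : ℝ) (hx : 0 ≤ x) (n : ℕ) :
    ∃ N, n ≤ N ∧ ∃ k, k < chaconH N ∧ x ∈ chaconLevel N k := by
  obtain ⟨a, ha⟩ := pow_unbounded_of_one_lt x (show (1 : ℝ) < 2 by norm_num)
  refine ⟨max a n, le_max_right _ _, ?_⟩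
  set N := max a n
  have h2 : x < 2 ^ N := lt_of_lt_of_le ha (pow_le_pow_right₀ (by norm_num) (le_max_left _ _))
  have h3 : chF N x < chaconH N := by
    unfold chF
    rw [Nat.floor_lt (by positivity)]
    have h6 : ((6 ^ N : ℕ) : ℝ) ≤ chaconH N := by exact_mod_cast chH_ge N
    have e : ((6 ^ N : ℕ) : ℝ) = 2 ^ N * 3 ^ N := by push_cast; rw [← mul_pow]; norm_num
    have : x * 3 ^ N < 2 ^ N * 3 ^ N := by gcongr
    linarith
  obtain ⟨k, hk, hI⟩ := chI_surj h3
  exact ⟨k, hk, mem_level.2 ⟨hx, hI.symm⟩⟩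

theorem exists_room (x : ℝ) (hx : 0 ≤ x) (n : ℕ) :
    ∃ N, n ≤ N ∧ ∃ k, k + chaconH n < chaconH N ∧ x ∈ chaconLevel N k := by
  obtain ⟨N, hN, k, hk, hxk⟩ := exists_tower x hx n
  have := chH_mono hN
  refine ⟨N + 1, by omega, ?_⟩
  rcases level_split hk hxk with h | h | h
  · exact ⟨_, by rw [chH_succ]; omega, h⟩
  · exact ⟨_, by rw [chH_succ]; omega, h⟩
  · exact ⟨_, by rw [chH_succ]; omega, h⟩

theorem measurable_chaconT : Measurable chaconT := by
  apply Measurable.subtype_mk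
  apply measurable_const.max
  intro s hs
  have : (fun x : ChaconX => chaconT0 (x : ℝ)) ⁻¹' s =
      ⋃ p : ℕ × ℕ, {x : ChaconX | p.2 + 1 < chaconH p.1 ∧ (x : ℝ) ∈ chaconLevel p.1 p.2 ∧
        (x : ℝ) + chDisp p.1 p.2 ∈ s} := by
    ext x
    simp only [mem_preimage, mem_iUnion, mem_ofPred_eq]
    constructor
    · intro h
      obtain ⟨N, _, k, hk, hx⟩ := exists_room x x.2 0
      have hk' : k + 1 < chaconH N := hk
      exact ⟨(N, k), hk', hx, by rw [← T0_eq hk' hx]; exact h⟩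
    · rintro ⟨p, h1, h2, h3⟩
      rw [T0_eq h1 h2]; exact h3
  rw [this]
  refine MeasurableSet.iUnion fun p => ?_
  refine (MeasurableSet.const _).inter (MeasurableSet.inter ?_ ?_)
  · exact measurable_subtype_coe measurableSet_Ico
  · exact (measurable_subtype_coe.add_const _) hs

/-- The base interval `[0,1)`. -/
def chA : Set ChaconX := {x | (x : ℝ) < 1}

/-- Levels of tower `n` contained in `[0,1)`. -/
def chO (n : ℕ) : Finset ℕ := (Finset.range (chaconH n)).filter fun k => chI n k < 3 ^ n

theorem mem_chO {n k : ℕ} : k ∈ chO n ↔ k < chaconH n ∧ chI n k < 3 ^ n := by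
  simp [chO]

theorem card_chO (n : ℕ) : (chO n).card = 3 ^ n := by
  have h1 : (chO n).image (chI n) = Finset.range (3 ^ n) := by
    ext v
    simp only [Finset.mem_image, mem_chO, Finset.mem_range]
    constructor
    · rintro ⟨k, hk, rfl⟩; exact hk.2
    · intro hv
      obtain ⟨k, hk, hI⟩ := chI_surj (lt_of_lt_of_le hv (chH_ge3 n))
      exact ⟨k, ⟨hk, by rw [hI]; exact hv⟩, hI⟩
  have h2 := Finset.card_image_of_injOn (s := chO n) (f := chI n)
    (fun a ha b hb h => chI_inj (mem_chO.1 ha).1 (mem_chO.1 hb).1 h)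
  rw [← h2, h1, Finset.card_range]

theorem visits_eq {N k l : ℕ} {x : ChaconX} (hx : (x : ℝ) ∈ chaconLevel N k)
    (hl : k + l ≤ chaconH N) :
    birkhoffSum chaconT (chA.indicator fun _ => (1 : ℝ)) l x =
      (((Finset.range l).filter fun i => k + i ∈ chO N).card : ℝ) := by
  rw [birkhoffSum, Finset.card_filter]
  push_cast
  refine Finset.sum_congr rfl fun i hi => ?_
  have hi' : i < l := Finset.mem_range.1 hi
  have hlt : k + i < chaconH N := by omega
  have hm := mem_level.1 (T_iter hx i hlt)
  have : chaconT^[i] x ∈ chA ↔ k + i ∈ chO N := by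
    rw [mem_chO, chA, mem_ofPred_eq, chF_lt_one (n := N) hm.1, hm.2]
    simp [hlt]
  rw [indicator_apply]
  simp only [this]

/-- Occurrences of tower `n` in tower `N`. -/
theorem starts (n N : ℕ) (hN : n ≤ N) : ∃ St : Set ℕ,
    (∀ s ∈ St, s + chaconH n ≤ chaconH N) ∧
    (∀ s ∈ St, ∀ t ∈ St, s < t → s + chaconH n ≤ t) ∧
    (∀ k ∈ chO N, ∃ s ∈ St, ∃ a ∈ chO n, k = s + a) := by
  induction N, hN using Nat.le_induction with
  | base =>
    refine ⟨{0}, by simp, by simp, fun k hk => ⟨0, rfl, k, hk, by simp⟩⟩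
  | succ N _ ih =>
    obtain ⟨St, h1, h2, h3⟩ := ih
    refine ⟨{t | ∃ s ∈ St, t = s ∨ t = s + chaconH N ∨ t = s + (2 * chaconH N + 1)}, ?_, ?_, ?_⟩
    · rintro t ⟨s, hs, ht⟩
      have := h1 s hs
      rw [chH_succ]; omega
    · rintro t ⟨s, hs, ht⟩ t' ⟨s', hs', ht'⟩ hlt
      have := h1 s hs
      have := h1 s' hs'
      have h4 := h2 s hs s' hs'
      have h5 := h2 s' hs' s hs
      omega
    · intro k hk
      rw [mem_chO, pow_succ] at hk
      have h33 := chH_ge3 N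
      have fin : ∀ a c, a < chaconH N → chI N a < 3 ^ N → k = a + c →
          (c = 0 ∨ c = chaconH N ∨ c = 2 * chaconH N + 1) →
          ∃ s ∈ {t | ∃ s ∈ St, t = s ∨ t = s + chaconH N ∨ t = s + (2 * chaconH N + 1)},
            ∃ a ∈ chO n, k = s + a := by
        intro a c ha hI hkc hc
        obtain ⟨s, hs, b, hb, hab⟩ := h3 a (mem_chO.2 ⟨ha, hI⟩)
        exact ⟨s + c, ⟨s, hs, by omega⟩, b, hb, by omega⟩
      rcases ch_cases N k with ⟨a, ha, hk', hI⟩ | ⟨a, ha, hk', hI⟩ | ⟨a, ha, hk', hI⟩ | ⟨hk', hI⟩ | ⟨hk', hI⟩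
      · exact fin a 0 ha (by omega) hk' (by omega)
      · exact fin a _ ha (by omega) hk' (by omega)
      · exact fin a _ ha (by omega) hk' (by omega)
      · omega
      · omega

theorem visits_le (n : ℕ) (x : ChaconX) :
    birkhoffSum chaconT (chA.indicator fun _ => (1 : ℝ)) (chaconH n) x ≤ 3 ^ n := by
  obtain ⟨N, hN, k, hk, hx⟩ := exists_room x x.2 n
  rw [visits_eq hx hk.le]
  obtain ⟨St, h1, h2, h3⟩ := starts n N hN
  have : ((Finset.range (chaconH n)).filter fun i => k + i ∈ chO N).card ≤ (chO n).card := by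
    have hex : ∀ i, ∃ a, k + i ∈ chO N → a ∈ chO n ∧ ∃ s ∈ St, k + i = s + a := by
      intro i
      by_cases h : k + i ∈ chO N
      · obtain ⟨s, hs, a, ha, e⟩ := h3 _ h
        exact ⟨a, fun _ => ⟨ha, s, hs, e⟩⟩
      · exact ⟨0, fun h' => absurd h' h⟩
    choose f hf using hex
    apply Finset.card_le_card_of_injOn f
    · intro i hi
      simp only [Finset.coe_filter, mem_ofPred_eq] at hi
      exact (hf i hi.2).1
    · intro i hi j hj hij
      simp only [Finset.coe_filter, mem_ofPred_eq, Finset.mem_range] at hi hj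
      obtain ⟨_, s, hs, e⟩ := hf i hi.2
      obtain ⟨_, t, ht, e'⟩ := hf j hj.2
      have h4 := h2 s hs t ht
      have h5 := h2 t ht s hs
      omega
  rw [card_chO] at this
  exact_mod_cast this

theorem visits_ge (n k : ℕ) (hk : k < chaconH n) (x : ChaconX)
    (hx : (x : ℝ) ∈ chaconLevel (n + 1) k) :
    3 ^ n ≤ birkhoffSum chaconT (chA.indicator fun _ => (1 : ℝ)) (chaconH n) x := by
  rw [visits_eq hx (by rw [chH_succ]; omega)]
  have : (chO n).card ≤ ((Finset.range (chaconH n)).filter fun i => k + i ∈ chO (n + 1)).card := by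
    apply Finset.card_le_card_of_injOn (fun a => if k ≤ a then a - k else a + chaconH n - k)
    · intro a ha
      obtain ⟨ha1, ha2⟩ := mem_chO.1 ha
      simp only [Finset.coe_filter, mem_ofPred_eq, Finset.mem_range, mem_chO, chH_succ, pow_succ]
      split_ifs with h
      · rw [show k + (a - k) = a by omega, chI1 ha1]
        omega
      · rw [show k + (a + chaconH n - k) = a + chaconH n by omega, chI2 ha1]
        omega
    · intro a ha b hb hab
      have ha1 := (mem_chO.1 ha).1
      have hb1 := (mem_chO.1 hb).1
      simp only at hab
      split_ifs at hab <;> omega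
  rw [card_chO] at this
  exact_mod_cast this

/-- Points never in a first subcolumn. -/
def chBad : Set ℝ := {x | 0 ≤ x ∧ ∀ n k, k < chaconH n → x ∉ chaconLevel (n + 1) k}

theorem bad_level (r : ℕ) : ∀ n k, k < chaconH n →
    volume (chBad ∩ chaconLevel n k) ≤ 2 ^ r * (3 : ℝ≥0∞)⁻¹ ^ (n + r) := by
  induction r with
  | zero =>
    intro n k _
    refine (measure_mono inter_subset_right).trans ?_
    rw [chaconLevel, Real.volume_Ico, add_sub_cancel_left, pow_zero, one_mul, add_zero,
      ENNReal.ofReal_pow (by positivity), ENNReal.ofReal_inv_of_pos (by norm_num)]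
    simp
  | succ r ih =>
    intro n k hk
    have hsub : chBad ∩ chaconLevel n k ⊆
        (chBad ∩ chaconLevel (n + 1) (k + chaconH n)) ∪
        (chBad ∩ chaconLevel (n + 1) (k + (2 * chaconH n + 1))) := by
      rintro x ⟨hb, hx⟩
      rcases level_split hk hx with h | h | h
      · exact absurd h (hb.2 n k hk)
      · exact Or.inl ⟨hb, h⟩
      · exact Or.inr ⟨hb, h⟩
    refine (measure_mono hsub).trans ((measure_union_le _ _).trans ?_)
    refine (add_le_add (ih _ _ (by rw [chH_succ]; omega)) (ih _ _ (by rw [chH_succ]; omega))).trans ?_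
    rw [← two_mul, ← mul_assoc, pow_succ' 2 r, show n + 1 + r = n + (r + 1) by ring]

theorem bad_level_null (n k : ℕ) (hk : k < chaconH n) : volume (chBad ∩ chaconLevel n k) = 0 := by
  have hlim : Filter.Tendsto (fun r : ℕ => (2 : ℝ≥0∞) ^ r * (3 : ℝ≥0∞)⁻¹ ^ (n + r)) Filter.atTop
      (nhds 0) := by
    have e : ∀ r : ℕ, (2 : ℝ≥0∞) ^ r * (3 : ℝ≥0∞)⁻¹ ^ (n + r) =
        (3 : ℝ≥0∞)⁻¹ ^ n * (2 * (3 : ℝ≥0∞)⁻¹) ^ r := by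
      intro r; rw [mul_pow, pow_add]; ring
    simp_rw [e]
    have h1 : (2 * (3 : ℝ≥0∞)⁻¹) < 1 := by
      rw [← div_eq_mul_inv]
      exact ENNReal.div_lt_of_lt_mul (by norm_num)
    have := ENNReal.Tendsto.const_mul (a := (3 : ℝ≥0∞)⁻¹ ^ n)
      (ENNReal.tendsto_pow_atTop_nhds_zero_of_lt_one h1)
      (Or.inr (ENNReal.pow_ne_top (by simp)))
    simpa using this
  exact le_antisymm (ge_of_tendsto' hlim fun r => bad_level r n k hk) (zero_le)

theorem bad_null : volume chBad = 0 := by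
  have hsub : chBad ⊆ ⋃ p : ℕ × ℕ, {x | p.2 < chaconH p.1 ∧ x ∈ chBad ∩ chaconLevel p.1 p.2} := by
    intro x hx
    obtain ⟨N, _, k, hk, hxk⟩ := exists_tower x hx.1 0
    exact mem_iUnion.2 ⟨(N, k), hk, hx, hxk⟩
  refine measure_mono_null hsub (measure_iUnion_null fun p => ?_)
  by_cases h : p.2 < chaconH p.1
  · refine measure_mono_null (fun x hx => hx.2) (bad_level_null p.1 p.2 h)
  · simp [h]

/-- The exceptional null set in `X`. -/
def chBadX : Set ChaconX := Subtype.val ⁻¹' chBad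

theorem not_bad {x : ChaconX} (hx : x ∉ chBadX) : ∃ n, 
    3 ^ n ≤ birkhoffSum chaconT (chA.indicator fun _ => (1 : ℝ)) (chaconH n) x := by
  have hx' : ¬ (0 ≤ (x : ℝ) ∧ ∀ n k, k < chaconH n → (x : ℝ) ∉ chaconLevel (n + 1) k) := hx
  push Not at hx'
  obtain ⟨n, k, hk, h⟩ := hx' x.2
  exact ⟨n, visits_ge n k hk x h⟩

theorem mu_apply (s : Set ChaconX) : chaconMu s = volume (Subtype.val '' s) :=
  comap_subtype_coe_apply measurableSet_Ici volume s

theorem mu_bad : chaconMu chBadX = 0 := by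
  rw [mu_apply]
  exact measure_mono_null (image_preimage_subset _ _) bad_null

theorem mu_A : chaconMu chA = 1 := by
  rw [mu_apply]
  have : Subtype.val '' chA = Ico (0 : ℝ) 1 := by
    ext x
    simp only [chA, mem_image, mem_ofPred_eq, Subtype.exists, mem_Ici, exists_and_left, mem_Ico]
    constructor
    · rintro ⟨y, h1, h2, rfl⟩; exact ⟨h2, h1⟩
    · rintro ⟨h1, h2⟩; exact ⟨x, h2, h1, rfl⟩
  rw [this]; simp

theorem measurableSet_chA : MeasurableSet chA := measurable_subtype_coe measurableSet_Iio

theorem sigmaFinite_mu : SigmaFinite chaconMu := by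
  refine ⟨⟨⟨fun n : ℕ => {x : ChaconX | (x : ℝ) < n}, fun _ => trivial, fun n => ?_, ?_⟩⟩⟩
  · rw [mu_apply]
    refine lt_of_le_of_lt (measure_mono (t := Ico (0 : ℝ) n) ?_) (by simp)
    rintro _ ⟨x, hx, rfl⟩
    exact ⟨x.2, hx⟩
  · ext x
    simp only [mem_iUnion, mem_ofPred_eq, mem_univ, iff_true]
    exact exists_nat_gt _

theorem birk_fst (k : ℕ) (z : ChaconX × ChaconX) :
    birkhoffSum (Prod.map chaconT chaconT) ((Prod.fst ⁻¹' chA).indicator fun _ => (1 : ℝ)) k z =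
      birkhoffSum chaconT (chA.indicator fun _ => (1 : ℝ)) k z.1 := by
  unfold birkhoffSum
  refine Finset.sum_congr rfl fun i _ => ?_
  rw [Prod.map_iterate]
  simp only [indicator_apply, mem_preimage, Prod.map_fst]

theorem birk_snd (k : ℕ) (z : ChaconX × ChaconX) :
    birkhoffSum (Prod.map chaconT chaconT) ((Prod.snd ⁻¹' chA).indicator fun _ => (1 : ℝ)) k z =
      birkhoffSum chaconT (chA.indicator fun _ => (1 : ℝ)) k z.2 := by
  unfold birkhoffSum
  refine Finset.sum_congr rfl fun i _ => ?_
  rw [Prod.map_iterate]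
  simp only [indicator_apply, mem_preimage, Prod.map_snd]

theorem visits_contra {x y : ChaconX} (hx : x ∉ chBadX) {c : ℝ} (hc : 1 < c)
    (h : ∀ k, c * birkhoffSum chaconT (chA.indicator fun _ => (1 : ℝ)) k x ≤
      birkhoffSum chaconT (chA.indicator fun _ => (1 : ℝ)) k y) : False := by
  obtain ⟨n, hn⟩ := not_bad hx
  have h1 := h (chaconH n)
  have h2 := visits_le n y
  have h3 : (0 : ℝ) < 3 ^ n := by positivity
  nlinarith

/-- **Proposition.**  For any `α ∈ (0,∞]` with `α ≠ 1`, there is no joining between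
`(X, μ, T)` and `(X, αμ, T)`. -/
theorem chacon_no_joining_alpha (α : ℝ≥0∞) (hα0 : 0 < α) (hα1 : α ≠ 1) :
    ¬ ∃ m : Measure (ChaconX × ChaconX),
        m.map (Prod.map chaconT chaconT) = m ∧
        m.map Prod.fst = chaconMu ∧ m.map Prod.snd = α • chaconMu := by
  rintro ⟨m, hm, h1, h2⟩
  have hU : MeasurePreserving (Prod.map chaconT chaconT) m m :=
    ⟨measurable_chaconT.prodMap measurable_chaconT, hm⟩
  have : SigmaFinite m :=
    SigmaFinite.of_map m measurable_fst.aemeasurable (by rw [h1]; exact sigmaFinite_mu)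
  have mF : m (Prod.fst ⁻¹' chA) = 1 := by
    rw [← Measure.map_apply measurable_fst measurableSet_chA, h1, mu_A]
  have mG : m (Prod.snd ⁻¹' chA) = α := by
    rw [← Measure.map_apply measurable_snd measurableSet_chA, h2, Measure.smul_apply, mu_A]
    simp
  have bF : m (Prod.fst ⁻¹' chBadX) = 0 := by
    refine Measure.preimage_null_of_map_null measurable_fst.aemeasurable ?_
    rw [h1]; exact mu_bad
  have bG : m (Prod.snd ⁻¹' chBadX) = 0 := by
    refine Measure.preimage_null_of_map_null measurable_snd.aemeasurable ?_
    rw [h2, Measure.smul_apply, mu_bad]; simp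
  have sF : MeasurableSet (Prod.fst ⁻¹' chA : Set (ChaconX × ChaconX)) :=
    measurable_fst measurableSet_chA
  have sG : MeasurableSet (Prod.snd ⁻¹' chA : Set (ChaconX × ChaconX)) :=
    measurable_snd measurableSet_chA
  rcases lt_or_gt_of_ne hα1 with hlt | hgt
  · obtain ⟨c, hc, hne⟩ := garsia_sets hU (Prod.snd ⁻¹' chA) (Prod.fst ⁻¹' chA) sG sF
      (by rw [mG]; exact (hlt.trans ENNReal.one_lt_top).ne) (by rw [mG]; exact hα0.ne')
      (by rw [mF, mG]; exact hlt)
    apply hne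
    refine measure_mono_null ?_ bG
    intro z hz
    by_contra hbad
    refine visits_contra (x := z.2) (y := z.1) hbad hc fun k => ?_
    rw [← birk_fst, ← birk_snd]; exact hz k
  · obtain ⟨c, hc, hne⟩ := garsia_sets hU (Prod.fst ⁻¹' chA) (Prod.snd ⁻¹' chA) sF sG
      (by rw [mF]; simp) (by rw [mF]; simp)
      (by rw [mF, mG]; exact hgt)
    apply hne
    refine measure_mono_null ?_ bF
    intro z hz
    by_contra hbad
    refine visits_contra (x := z.1) (y := z.2) hbad hc fun k => ?_
    rw [← birk_fst, ← birk_snd]; exact hz k
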